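/- Assume G is connected, let Y_obs ∈ ℝ^n, y_∞ = ‖Y_obs‖_∞, let μ_min ≤ μ_max be the smallest and largest eigenvalues of B(A), ν = 1 − μ_min/μ_max, B̃ = B(A)/μ_max, and T_r(A) = (I − B̃)^r μ_max^{-1} S̃_in Y_obs. Let i, j, u be nodes such that dist_G(i,u) ≥ k, dist_G(j,u) ≥ k, and dist_G(i,v) ≥ q, dist_G(j,v) ≥ q for all v ∈ V_tr. Then the derivative of (T_r(A))_u along the symmetric perturbation of the entry pair (A_{ij}, A_{ji}) (with μ_max and m held fixed) satisfies: |∂(T_r)_u/∂A_{ij}| = 0 if q + k > r, and |∂(T_r)_u/∂A_{ij}| ≤ (4 λ y_∞ / (m μ_max² √|V_tr|)) (r − q − k) ν^{r−1} otherwise. -/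

import Mathlib

/-! STATEMENT 15: the derivative of `(T_r)_u` along the symmetric perturbation of
`(A i j, A j i)` vanishes when `q + k > r` and is otherwise bounded by
`(4 λ y_∞ / (m μmax² √|V_tr|)) (r - q - k) ν^(r-1)`. -/

open scoped BigOperators Matrix

/-- The (weighted) graph Laplacian `L = D - A` with degree matrix `D = diag (A 1ₙ)`. -/
noncomputable def lapMat {n : ℕ} (A : Matrix (Fin n) (Fin n) ℝ) :
    Matrix (Fin n) (Fin n) ℝ :=
  Matrix.diagonal (fun u => ∑ v, A u v) - A

/-- The diagonal 0/1 selection matrix of a set `V` of nodes. -/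
noncomputable def selMat {n : ℕ} (V : Finset (Fin n)) : Matrix (Fin n) (Fin n) ℝ :=
  Matrix.diagonal (fun u => if u ∈ V then 1 else 0)

/-- `S̃_in = S_in / |V_tr|`. -/
noncomputable def Stin {n : ℕ} (Vtr : Finset (Fin n)) : Matrix (Fin n) (Fin n) ℝ :=
  (Vtr.card : ℝ)⁻¹ • selMat Vtr

/-- `B = S̃_in + λ L̃` where `L̃ = L/m`. -/
noncomputable def Bmat {n : ℕ} (Vtr : Finset (Fin n)) (lam : ℝ) (m : ℕ)
    (A : Matrix (Fin n) (Fin n) ℝ) : Matrix (Fin n) (Fin n) ℝ :=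
  Stin Vtr + (lam / m) • lapMat A

/-- `T_r = (I - B̃)^r μmax⁻¹ S̃_in Y_obs`, the `r`-th term of the Neumann series of
`Y(A) = B⁻¹ S̃_in Y_obs`, where `B̃ = B/μmax`. -/
noncomputable def Tvec {n : ℕ} (Vtr : Finset (Fin n)) (lam : ℝ) (m : ℕ)
    (A : Matrix (Fin n) (Fin n) ℝ) (μmax : ℝ) (Yobs : Fin n → ℝ) (r : ℕ) :
    Fin n → ℝ :=
  ((1 - μmax⁻¹ • Bmat Vtr lam m A) ^ r).mulVec (μmax⁻¹ • (Stin Vtr).mulVec Yobs)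

/-- Symmetric perturbation of the entry pair `(A i j, A j i)` of `A` to the value `θ`. -/
noncomputable def pert {n : ℕ} (A : Matrix (Fin n) (Fin n) ℝ) (i j : Fin n) (θ : ℝ) :
    Matrix (Fin n) (Fin n) ℝ :=
  Matrix.of fun s t => if (s = i ∧ t = j) ∨ (s = j ∧ t = i) then θ else A s t

/-! Write `M = 1 - β⁻¹ B`, `w = β⁻¹ S̃_in Y_obs` and `d = e_i - e_j`. Moving the entry pair
`(A i j, A j i)` moves the Laplacian along the rank-one matrix `d dᵀ`, so the product rule turns
the derivative of `M ^ r w` at `u` into a sum over `a + b = r - 1` of multiples of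
`(e_uᵀ M ^ a d) (dᵀ M ^ b w)`. The entries of `M ^ a` vanish between nodes at distance more than
`a`, which leaves only the summands with `k ≤ a` and `q ≤ b`: there are `r - q - k` of them,
truncated at `0`. Each is at most `ν ^ (r - 1)` times the norms of the vectors involved, since the
eigenvalues of the symmetric matrix `M` lie in `[0, ν]`, where `ν = 1 - α / β` for a spectrum of
`B` contained in `[α, β]`. -/

open Matrix WithLp SimpleGraph

section Spectrum

variable {ι : Type*} [Fintype ι] [DecidableEq ι]

lemma mem_spectrum_iff_exists_mulVec_eq_smul {K : Type*} [Field K] {M : Matrix ι ι K} {μ : K} :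
    μ ∈ spectrum K M ↔ ∃ x, x ≠ 0 ∧ M *ᵥ x = μ • x := by
  rw [← spectrum_toLin', ← Module.End.hasEigenvalue_iff_mem_spectrum]
  constructor
  · intro h
    obtain ⟨x, hx⟩ := h.exists_hasEigenvector
    exact ⟨x, hx.2, hx.apply_eq_smul⟩
  · rintro ⟨x, hx, h⟩
    exact Module.End.hasEigenvalue_of_hasEigenvector ⟨Module.End.mem_eigenspace_iff.mpr h, hx⟩

open scoped MatrixOrder in
lemma dotProduct_mulVec_le_of_spectrum_le {M : Matrix ι ι ℝ} (hM : M.IsHermitian) {β : ℝ}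
    (hβ : ∀ μ ∈ spectrum ℝ M, μ ≤ β) (x : ι → ℝ) : x ⬝ᵥ M *ᵥ x ≤ β * (x ⬝ᵥ x) := by
  have hle : M ≤ algebraMap ℝ _ β := le_algebraMap_of_spectrum_le hβ hM
  have hnonneg := (le_iff.mp hle).dotProduct_mulVec_nonneg x
  simpa [sub_mulVec, Algebra.algebraMap_eq_smul_one, smul_mulVec] using hnonneg

lemma norm_one_sub_inv_smul_le {R : Type*} [NormedRing R] [StarRing R] [NormedAlgebra ℝ R]
    [IsometricContinuousFunctionalCalculus ℝ R IsSelfAdjoint] [Nontrivial R] {b : R}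
    (hb : IsSelfAdjoint b) {α β : ℝ} (hspec : spectrum ℝ b ⊆ Set.Icc α β) (hβ : 0 < β) :
    ‖1 - β⁻¹ • b‖ ≤ 1 - α / β := by
  have hcfc : cfc (fun x : ℝ => 1 - β⁻¹ * x) b = 1 - β⁻¹ • b := by
    rw [cfc_sub .., cfc_const_one .., cfc_const_mul_id ..]
  have habs : ∀ x ∈ Set.Icc α β, ‖1 - β⁻¹ * x‖ ≤ 1 - α / β := by
    rintro x ⟨hαx, hxβ⟩
    have hα : α / β ≤ x / β := by gcongr
    have hx : x / β ≤ 1 := (div_le_one hβ).mpr hxβ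
    rw [inv_mul_eq_div, Real.norm_of_nonneg (sub_nonneg.mpr hx)]
    exact sub_le_sub_left hα 1
  obtain ⟨x, hx⟩ := ContinuousFunctionalCalculus.spectrum_nonempty (R := ℝ) b hb
  rw [← hcfc]
  exact norm_cfc_le ((norm_nonneg _).trans (habs x (hspec hx))) fun y hy => habs y (hspec hy)

end Spectrum

section Locality

variable {V R : Type*} [Fintype V] [DecidableEq V] [Semiring R] {G : SimpleGraph V}
  {M : Matrix V V R}

lemma pow_apply_eq_zero_of_lt_edist (hM : ∀ s t, 1 < G.edist s t → M s t = 0) (a : ℕ) :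
    ∀ s t, a < G.edist s t → (M ^ a) s t = 0 := by
  induction a with
  | zero =>
    intro s t h
    have hst : s ≠ t := by rintro rfl; simp at h
    rw [pow_zero, one_apply_ne hst]
  | succ a ih =>
    intro s t h
    rw [pow_succ, mul_apply]
    refine Finset.sum_eq_zero fun v _ => ?_
    by_cases hvt : G.edist v t ≤ 1
    · have hsv : a < G.edist s v := by
        by_contra! hsv
        exact (G.edist_triangle.trans (add_le_add hsv hvt)).not_gt (mod_cast h)
      rw [ih s v hsv, zero_mul]
    · rw [hM v t (not_le.mp hvt), mul_zero]

lemma dotProduct_pow_mulVec_eq_zero_of_lt_edist (hM : ∀ s t, 1 < G.edist s t → M s t = 0)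
    {a : ℕ} {x y : V → R} (hxy : ∀ s t, x s ≠ 0 → y t ≠ 0 → a < G.edist s t) :
    x ⬝ᵥ M ^ a *ᵥ y = 0 := by
  simp only [dotProduct, mulVec, Finset.mul_sum]
  refine Finset.sum_eq_zero fun s _ => Finset.sum_eq_zero fun t _ => ?_
  by_cases hs : x s = 0
  · rw [hs, zero_mul]
  by_cases ht : y t = 0
  · rw [ht, mul_zero, mul_zero]
  rw [pow_apply_eq_zero_of_lt_edist hM a s t (hxy s t hs ht), zero_mul, mul_zero]

end Locality

section RankOneDerivative

open scoped Matrix.Norms.L2Operator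

variable {ι 𝕜 : Type*} [Fintype ι] [DecidableEq ι] [RCLike 𝕜]

lemma norm_dotProduct_mulVec_le (M : Matrix ι ι 𝕜) (x y : ι → 𝕜) :
    ‖x ⬝ᵥ M *ᵥ y‖ ≤ ‖toLp 2 x‖ * (‖M‖ * ‖toLp 2 y‖) := by
  have hstar : ‖toLp 2 (star x)‖ = ‖toLp 2 x‖ := by
    simp [EuclideanSpace.norm_eq]
  have hinner : inner 𝕜 (toLp 2 (star x)) (toLp 2 (M *ᵥ y)) = x ⬝ᵥ M *ᵥ y := by
    rw [EuclideanSpace.inner_toLp_toLp, star_star, dotProduct_comm]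
  calc ‖x ⬝ᵥ M *ᵥ y‖ ≤ ‖toLp 2 (star x)‖ * ‖toLp 2 (M *ᵥ y)‖ := by
        rw [← hinner]; exact norm_inner_le_norm _ _
    _ ≤ ‖toLp 2 x‖ * (‖M‖ * ‖toLp 2 y‖) := by
        rw [hstar]; gcongr; exact l2_opNorm_mulVec M (toLp 2 y)

lemma hasDerivAt_dotProduct_pow_mulVec {N : 𝕜 → Matrix ι ι 𝕜} {t : 𝕜} {p d : ι → 𝕜}
    (hN : HasDerivAt N (vecMulVec p d) t) (x w : ι → 𝕜) (r : ℕ) :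
    HasDerivAt (fun θ => x ⬝ᵥ N θ ^ r *ᵥ w)
      (∑ b ∈ Finset.range r, (x ⬝ᵥ N t ^ (r - 1 - b) *ᵥ p) * (d ⬝ᵥ N t ^ b *ᵥ w)) t := by
  let φ : Matrix ι ι 𝕜 →ₗ[𝕜] 𝕜 := (dotProductBilin 𝕜 𝕜 x) ∘ₗ (mulVecBilin 𝕜 𝕜).flip w
  have hφ (X : Matrix ι ι 𝕜) : φ X = x ⬝ᵥ X *ᵥ w := rfl
  refine (φ.toContinuousLinearMap.hasFDerivAt.comp_hasDerivAt t (hN.fun_pow' r)).congr_deriv ?_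
  rw [LinearMap.coe_toContinuousLinearMap', map_sum]
  refine Finset.sum_congr rfl fun b _ => ?_
  rw [hφ, ← mulVec_mulVec, ← mulVec_mulVec, vecMulVec_mulVec, op_smul_eq_smul, mulVec_smul,
    dotProduct_smul, smul_eq_mul, mul_comm, Nat.pred_eq_sub_one]

lemma norm_dotProduct_pow_mulVec_le [Nonempty ι] {M : Matrix ι ι 𝕜} {ν : ℝ} (hν : ‖M‖ ≤ ν)
    (x y : ι → 𝕜) (a : ℕ) : ‖x ⬝ᵥ M ^ a *ᵥ y‖ ≤ ‖toLp 2 x‖ * ‖toLp 2 y‖ * ν ^ a := by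
  have hpow : ‖M ^ a‖ ≤ ν ^ a := (norm_pow_le M a).trans (by gcongr)
  calc ‖x ⬝ᵥ M ^ a *ᵥ y‖ ≤ ‖toLp 2 x‖ * (‖M ^ a‖ * ‖toLp 2 y‖) := norm_dotProduct_mulVec_le ..
    _ ≤ ‖toLp 2 x‖ * (ν ^ a * ‖toLp 2 y‖) := by gcongr
    _ = ‖toLp 2 x‖ * ‖toLp 2 y‖ * ν ^ a := by ring

lemma norm_sum_dotProduct_pow_mulVec_le [Nonempty ι] {G : SimpleGraph ι} {M : Matrix ι ι 𝕜}
    {ν : ℝ} (hν : ‖M‖ ≤ ν) (hM : ∀ s t, 1 < G.edist s t → M s t = 0) {x p d w : ι → 𝕜}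
    {k q : ℕ} (hxp : ∀ s t, x s ≠ 0 → p t ≠ 0 → k ≤ G.edist s t)
    (hdw : ∀ s t, d s ≠ 0 → w t ≠ 0 → q ≤ G.edist s t) (r : ℕ) :
    ‖∑ b ∈ Finset.range r, (x ⬝ᵥ M ^ (r - 1 - b) *ᵥ p) * (d ⬝ᵥ M ^ b *ᵥ w)‖ ≤
      ((r - q - k : ℕ) : ℝ) *
        (‖toLp 2 x‖ * ‖toLp 2 p‖ * (‖toLp 2 d‖ * ‖toLp 2 w‖) * ν ^ (r - 1)) := by
  set term : ℕ → 𝕜 := fun b => (x ⬝ᵥ M ^ (r - 1 - b) *ᵥ p) * (d ⬝ᵥ M ^ b *ᵥ w) with hterm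
  set C := ‖toLp 2 x‖ * ‖toLp 2 p‖ * (‖toLp 2 d‖ * ‖toLp 2 w‖) * ν ^ (r - 1) with hC
  have hν0 : 0 ≤ ν := (norm_nonneg M).trans hν
  have hleft {a : ℕ} (ha : a < k) : x ⬝ᵥ M ^ a *ᵥ p = 0 :=
    dotProduct_pow_mulVec_eq_zero_of_lt_edist hM fun s t hs ht =>
      (Nat.cast_lt.mpr ha).trans_le (hxp s t hs ht)
  have hright {b : ℕ} (hb : b < q) : d ⬝ᵥ M ^ b *ᵥ w = 0 :=
    dotProduct_pow_mulVec_eq_zero_of_lt_edist hM fun s t hs ht =>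
      (Nat.cast_lt.mpr hb).trans_le (hdw s t hs ht)
  have hzero : ∀ b ∈ Finset.range r, b ∉ Finset.Ico q (r - k) → term b = 0 := by
    intro b hb hb'
    rw [Finset.mem_range] at hb
    rw [Finset.mem_Ico, not_and_or, not_le, not_lt] at hb'
    rcases hb' with hbq | hbk
    · simp only [hterm, hright hbq, mul_zero]
    · simp only [hterm, hleft (show r - 1 - b < k by lia), zero_mul]
  have hle : ∀ b ∈ Finset.Ico q (r - k), ‖term b‖ ≤ C := by
    intro b hb
    have hsplit : ν ^ (r - 1) = ν ^ (r - 1 - b) * ν ^ b := by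
      rw [Finset.mem_Ico] at hb
      rw [← pow_add, Nat.sub_add_cancel (by lia)]
    rw [norm_mul, hC, hsplit, mul_mul_mul_comm]
    gcongr <;> exact norm_dotProduct_pow_mulVec_le hν ..
  have hsub : Finset.Ico q (r - k) ⊆ Finset.range r := fun b hb => by
    rw [Finset.mem_Ico] at hb; rw [Finset.mem_range]; lia
  calc ‖∑ b ∈ Finset.range r, term b‖ = ‖∑ b ∈ Finset.Ico q (r - k), term b‖ := by
        rw [Finset.sum_subset hsub hzero]
    _ ≤ ∑ _b ∈ Finset.Ico q (r - k), C := norm_sum_le_of_le _ hle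
    _ = ((r - q - k : ℕ) : ℝ) * C := by
        rw [Finset.sum_const, Nat.card_Ico, nsmul_eq_mul, Nat.sub_right_comm]

end RankOneDerivative

section EdgeVector

variable {V : Type*} [DecidableEq V]

/-- The signed incidence vector `e_i - e_j` of the node pair `(i, j)`, zero when `i = j`; the
Laplacian of a single unit-weight edge is its outer square. -/
def edgeVec (i j : V) : V → ℝ := Pi.single i 1 - Pi.single j 1

lemma eq_or_eq_of_edgeVec_ne_zero {i j s : V} (hs : edgeVec i j s ≠ 0) : s = i ∨ s = j := by
  contrapose! hs
  simp [edgeVec, hs.1, hs.2]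

lemma norm_toLp_edgeVec_le [Fintype V] (i j : V) : ‖toLp 2 (edgeVec i j)‖ ≤ 2 := by
  calc ‖EuclideanSpace.single i (1 : ℝ) - EuclideanSpace.single j 1‖
      ≤ ‖EuclideanSpace.single i (1 : ℝ)‖ + ‖EuclideanSpace.single j (1 : ℝ)‖ := norm_sub_le _ _
    _ = 2 := by norm_num

end EdgeVector

section Smoothing

variable {n : ℕ} {A : Matrix (Fin n) (Fin n) ℝ} {Vtr : Finset (Fin n)}

lemma pert_eq_add_smul (hsymm : A.IsSymm) (i j : Fin n) (θ : ℝ) :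
    pert A i j θ = A + (θ - A i j) • pert 0 i j 1 := by
  ext s t
  have hji : A j i = A i j := hsymm.apply i j
  simp only [pert, of_apply, Matrix.add_apply, Matrix.smul_apply, Matrix.zero_apply, smul_eq_mul]
  grind

lemma pert_apply_self (hsymm : A.IsSymm) (i j : Fin n) : pert A i j (A i j) = A := by
  rw [pert_eq_add_smul hsymm, sub_self, zero_smul, add_zero]

lemma lapMat_add_smul (A E : Matrix (Fin n) (Fin n) ℝ) (c : ℝ) :
    lapMat (A + c • E) = lapMat A + c • lapMat E := by
  ext s t
  simp only [lapMat, Matrix.add_apply, Matrix.sub_apply, Matrix.smul_apply, smul_eq_mul,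
    diagonal_apply, Finset.sum_add_distrib, ← Finset.mul_sum]
  split_ifs <;> ring

-- For `i = j` both sides vanish: a loop contributes equally to `D` and to `A`.
lemma lapMat_pert_zero_one (i j : Fin n) :
    lapMat (pert 0 i j 1) = vecMulVec (edgeVec i j) (edgeVec i j) := by
  have hdeg (s : Fin n) : ∑ t, pert 0 i j 1 s t = if s = i ∨ s = j then 1 else 0 := by
    simp only [pert, of_apply, Matrix.zero_apply]
    by_cases hi : s = i
    · by_cases hj : s = j
      · subst hi hj
        simp
      · simp [hi, show i ≠ j from hi ▸ hj]
    · by_cases hj : s = j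
      · simp [hj, show j ≠ i from hj ▸ hi]
      · simp [hi, hj]
  ext s t
  simp only [lapMat, Matrix.sub_apply, diagonal_apply, hdeg]
  simp only [pert, of_apply, Matrix.zero_apply, vecMulVec_apply, edgeVec, Pi.sub_apply,
    Pi.single_apply]
  grind

lemma lapMat_mulVec_one (A : Matrix (Fin n) (Fin n) ℝ) : lapMat A *ᵥ 1 = 0 := by
  ext s
  rw [lapMat, sub_mulVec, Pi.sub_apply, mulVec_diagonal]
  simp [mulVec, dotProduct]

lemma Bmat_pert (hsymm : A.IsSymm) (Vtr : Finset (Fin n)) (lam : ℝ) (m : ℕ) (i j : Fin n)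
    (θ : ℝ) :
    Bmat Vtr lam m (pert A i j θ) =
      Bmat Vtr lam m A + (θ - A i j) • (lam / m) • vecMulVec (edgeVec i j) (edgeVec i j) := by
  rw [Bmat, Bmat, pert_eq_add_smul hsymm, lapMat_add_smul, lapMat_pert_zero_one]
  module

open scoped Matrix.Norms.L2Operator in
lemma hasDerivAt_one_sub_smul_Bmat_pert (hsymm : A.IsSymm) (Vtr : Finset (Fin n)) (lam : ℝ)
    (m : ℕ) (i j : Fin n) (c : ℝ) :
    HasDerivAt (fun θ => 1 - c • Bmat Vtr lam m (pert A i j θ))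
      (vecMulVec (-(c * (lam / m)) • edgeVec i j) (edgeVec i j)) (A i j) := by
  have hsub := (hasDerivAt_id (A i j)).sub_const (A i j)
  have hB := (hsub.smul_const ((lam / m) • vecMulVec (edgeVec i j) (edgeVec i j))).const_add
    (Bmat Vtr lam m A)
  simp only [Bmat_pert hsymm]
  refine ((hB.const_smul c).const_sub 1).congr_deriv ?_
  rw [smul_vecMulVec, one_smul, neg_smul, mul_smul]

lemma hasDerivAt_Tvec_pert (hsymm : A.IsSymm) (Vtr : Finset (Fin n)) (lam : ℝ) (m : ℕ)
    (i j : Fin n) (μ : ℝ) (Y : Fin n → ℝ) (r : ℕ) (u : Fin n) :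
    HasDerivAt (fun θ => Tvec Vtr lam m (pert A i j θ) μ Y r u)
      (∑ b ∈ Finset.range r,
        (Pi.single u 1 ⬝ᵥ (1 - μ⁻¹ • Bmat Vtr lam m A) ^ (r - 1 - b) *ᵥ
          -(μ⁻¹ * (lam / m)) • edgeVec i j) *
        (edgeVec i j ⬝ᵥ (1 - μ⁻¹ • Bmat Vtr lam m A) ^ b *ᵥ μ⁻¹ • Stin Vtr *ᵥ Y)) (A i j) := by
  have h := hasDerivAt_dotProduct_pow_mulVec
    (hasDerivAt_one_sub_smul_Bmat_pert hsymm Vtr lam m i j μ⁻¹) (Pi.single u 1)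
    (μ⁻¹ • Stin Vtr *ᵥ Y) r
  rw [pert_apply_self hsymm] at h
  exact h.congr_of_eventuallyEq (.of_forall fun θ => (single_one_dotProduct u _).symm)

lemma isHermitian_Bmat (hsymm : A.IsSymm) (Vtr : Finset (Fin n)) (lam : ℝ) (m : ℕ) :
    (Bmat Vtr lam m A).IsHermitian := by
  have hA : A.IsHermitian := hsymm
  have hdiag (f : Fin n → ℝ) : (diagonal f).IsHermitian := isHermitian_diagonal f
  exact ((hdiag _).smul (.all _)).add (((hdiag _).sub hA).smul (.all _))

lemma one_sub_smul_Bmat_apply_eq_zero_of_one_lt_edist {G : SimpleGraph (Fin n)}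
    (hsupp : ∀ s t, s ≠ t → ¬ G.Adj s t → A s t = 0) (Vtr : Finset (Fin n)) (lam : ℝ) (m : ℕ)
    (c : ℝ) (s t : Fin n) (hst : 1 < G.edist s t) : (1 - c • Bmat Vtr lam m A) s t = 0 := by
  rw [← not_le, edist_le_one_iff_adj_or_eq, not_or] at hst
  simp [Bmat, Stin, selMat, lapMat, hst.2, hsupp s t hst.2 hst.1]

lemma one_dotProduct_Bmat_mulVec_one (hVtr : Vtr.Nonempty) (lam : ℝ) (m : ℕ)
    (A : Matrix (Fin n) (Fin n) ℝ) : 1 ⬝ᵥ Bmat Vtr lam m A *ᵥ 1 = 1 := by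
  have hcard : (Vtr.card : ℝ) ≠ 0 := mod_cast hVtr.card_ne_zero
  simp [Bmat, add_mulVec, smul_mulVec, lapMat_mulVec_one, Stin, selMat,
    dotProduct, mulVec_diagonal, hcard]

lemma pos_of_spectrum_Bmat_le (hsymm : A.IsSymm) (hVtr : Vtr.Nonempty) {lam : ℝ} {m : ℕ} {β : ℝ}
    (hβ : ∀ μ ∈ spectrum ℝ (Bmat Vtr lam m A), μ ≤ β) : 0 < β := by
  have h := dotProduct_mulVec_le_of_spectrum_le (isHermitian_Bmat hsymm Vtr lam m) hβ 1
  rw [one_dotProduct_Bmat_mulVec_one hVtr] at h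
  exact pos_of_mul_pos_left (one_pos.trans_le h) (dotProduct_self_star_nonneg 1)

lemma Stin_mulVec_apply (Vtr : Finset (Fin n)) (Y : Fin n → ℝ) (s : Fin n) :
    (Stin Vtr *ᵥ Y) s = if s ∈ Vtr then (Vtr.card : ℝ)⁻¹ * Y s else 0 := by
  simp [Stin, selMat, smul_mulVec, mulVec_diagonal]

lemma norm_toLp_Stin_mulVec_le (Vtr : Finset (Fin n)) (Y : Fin n → ℝ) :
    ‖toLp 2 (Stin Vtr *ᵥ Y)‖ ≤ ‖Y‖ / √(Vtr.card : ℝ) := by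
  refine le_of_sq_le_sq ?_ (by positivity)
  rw [EuclideanSpace.norm_sq_eq, div_pow, Real.sq_sqrt (by positivity)]
  calc ∑ s, ‖(Stin Vtr *ᵥ Y) s‖ ^ 2
      ≤ ∑ s, if s ∈ Vtr then ((Vtr.card : ℝ)⁻¹ * ‖Y‖) ^ 2 else 0 := by
        gcongr with s
        rw [Stin_mulVec_apply]
        split_ifs
        · rw [norm_mul, norm_inv, Real.norm_natCast]
          gcongr
          exact norm_le_pi_norm Y s
        · simp
    _ = ‖Y‖ ^ 2 / Vtr.card := by
        rw [Finset.sum_ite_mem, Finset.univ_inter, Finset.sum_const, nsmul_eq_mul]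
        field_simp

end Smoothing

open scoped Matrix.Norms.L2Operator in
theorem neumann_term_deriv_bound_general
    {n : ℕ} {G : SimpleGraph (Fin n)} {A : Matrix (Fin n) (Fin n) ℝ}
    (hsupp : ∀ s t, s ≠ t → ¬ G.Adj s t → A s t = 0) (hsymm : A.IsSymm)
    {m : ℕ} (hm : 0 < m) {Vtr : Finset (Fin n)} (hVtr : Vtr.Nonempty) {lam α β : ℝ}
    (hspec : spectrum ℝ (Bmat Vtr lam m A) ⊆ Set.Icc α β)
    (Yobs : Fin n → ℝ) {i j u : Fin n} {k q : ℕ}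
    (hik : k ≤ G.edist i u) (hjk : k ≤ G.edist j u)
    (hiq : ∀ v ∈ Vtr, q ≤ G.edist i v) (hjq : ∀ v ∈ Vtr, q ≤ G.edist j v) (r : ℕ) :
    |deriv (fun θ => Tvec Vtr lam m (pert A i j θ) β Yobs r u) (A i j)| ≤
      4 * |lam| * ‖Yobs‖ / (m * β ^ 2 * √(Vtr.card : ℝ)) * ((r - q - k : ℕ) : ℝ) *
        (1 - α / β) ^ (r - 1) := by
  have : Nonempty (Fin n) := ⟨u⟩
  have hβ : 0 < β := pos_of_spectrum_Bmat_le hsymm hVtr fun μ hμ => (hspec hμ).2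
  have hnorm := norm_one_sub_inv_smul_le (isHermitian_Bmat hsymm Vtr lam m).isSelfAdjoint hspec hβ
  have hlocal := one_sub_smul_Bmat_apply_eq_zero_of_one_lt_edist hsupp Vtr lam m β⁻¹
  have hleft : ∀ s t, (Pi.single u 1 : Fin n → ℝ) s ≠ 0 →
      (-(β⁻¹ * (lam / m)) • edgeVec i j) t ≠ 0 → k ≤ G.edist s t := by
    intro s t hs ht
    obtain rfl : s = u := of_not_not fun h => hs (Pi.single_eq_of_ne h 1)
    rw [edist_comm]
    rcases eq_or_eq_of_edgeVec_ne_zero (right_ne_zero_of_mul ht) with rfl | rfl <;> assumption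
  have hright : ∀ s t, edgeVec i j s ≠ 0 → (β⁻¹ • Stin Vtr *ᵥ Yobs) t ≠ 0 →
      q ≤ G.edist s t := by
    intro s t hs ht
    have htr : t ∈ Vtr := of_not_not fun h =>
      right_ne_zero_of_mul ht ((Stin_mulVec_apply Vtr Yobs t).trans (if_neg h))
    rcases eq_or_eq_of_edgeVec_ne_zero hs with rfl | rfl
    exacts [hiq t htr, hjq t htr]
  rw [(hasDerivAt_Tvec_pert hsymm Vtr lam m i j β Yobs r u).deriv]
  have hν : 0 ≤ 1 - α / β := (norm_nonneg _).trans hnorm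
  have hd := norm_toLp_edgeVec_le i j
  have hY := norm_toLp_Stin_mulVec_le Vtr Yobs
  refine (norm_sum_dotProduct_pow_mulVec_le hnorm hlocal hleft hright r).trans ?_
  calc _ = ((r - q - k : ℕ) : ℝ) * (β⁻¹ * (|lam| / m) * ‖toLp 2 (edgeVec i j)‖ *
          (‖toLp 2 (edgeVec i j)‖ * (β⁻¹ * ‖toLp 2 (Stin Vtr *ᵥ Yobs)‖)) *
          (1 - α / β) ^ (r - 1)) := by
        simp [norm_smul, abs_of_pos hβ]
    _ ≤ ((r - q - k : ℕ) : ℝ) * (β⁻¹ * (|lam| / m) * 2 *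
          (2 * (β⁻¹ * (‖Yobs‖ / √(Vtr.card : ℝ)))) * (1 - α / β) ^ (r - 1)) := by
        gcongr
    _ = _ := by
        field_simp
        ring

theorem neumann_term_deriv_bound
    {n : ℕ} (G : SimpleGraph (Fin n)) (A : Matrix (Fin n) (Fin n) ℝ)
    (hconn : G.Connected)
    (hsupp : ∀ u v, ¬ G.Adj u v → A u v = 0)
    (hpos : ∀ u v, G.Adj u v → 0 < A u v)
    (hsymm : A.IsSymm)
    (m : ℕ) (hmeq : m = G.edgeSet.ncard) (hm : 0 < m)
    (Vtr : Finset (Fin n)) (hVtr : Vtr.Nonempty)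
    (lam : ℝ) (hlam : 0 < lam)
    (μmin μmax : ℝ)
    (hmin_mem : ∃ x : Fin n → ℝ, x ≠ 0 ∧ (Bmat Vtr lam m A).mulVec x = μmin • x)
    (hmin_le : ∀ (μ : ℝ) (x : Fin n → ℝ), x ≠ 0 →
      (Bmat Vtr lam m A).mulVec x = μ • x → μmin ≤ μ)
    (hmax_mem : ∃ x : Fin n → ℝ, x ≠ 0 ∧ (Bmat Vtr lam m A).mulVec x = μmax • x)
    (hmax_ge : ∀ (μ : ℝ) (x : Fin n → ℝ), x ≠ 0 →
      (Bmat Vtr lam m A).mulVec x = μ • x → μ ≤ μmax)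
    (Yobs : Fin n → ℝ) (i j u : Fin n) (k q : ℕ)
    (hik : (k : ℕ∞) ≤ G.edist i u) (hjk : (k : ℕ∞) ≤ G.edist j u)
    (hiq : ∀ v ∈ Vtr, (q : ℕ∞) ≤ G.edist i v)
    (hjq : ∀ v ∈ Vtr, (q : ℕ∞) ≤ G.edist j v)
    (r : ℕ) :
    (r < q + k →
      deriv (fun θ : ℝ => Tvec Vtr lam m (pert A i j θ) μmax Yobs r u) (A i j) = 0) ∧
    (q + k ≤ r →
      |deriv (fun θ : ℝ => Tvec Vtr lam m (pert A i j θ) μmax Yobs r u) (A i j)| ≤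
        4 * lam * ‖Yobs‖ / ((m : ℝ) * μmax ^ 2 * Real.sqrt (Vtr.card : ℝ)) *
          ((r - q - k : ℕ) : ℝ) * (1 - μmin / μmax) ^ (r - 1)) := by
  have h := neumann_term_deriv_bound_general (fun s t _ => hsupp s t) hsymm hm hVtr
    (fun μ hμ => by
      obtain ⟨x, hx, hBx⟩ := mem_spectrum_iff_exists_mulVec_eq_smul.mp hμ
      exact ⟨hmin_le μ x hx hBx, hmax_ge μ x hx hBx⟩) Yobs hik hjk hiq hjq r
  rw [abs_of_pos hlam] at h
  exact ⟨fun hr => by simpa [show r - q - k = 0 by lia] using h, fun _ => h⟩
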